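/- arXiv:1605.00863 — 2 statements merged into one kernel-verified Lean document; each statement's English description precedes it below -/
import Mathlib

section
/- Let k, Δ, d ≥ 2 with Δ ≤ k, and let H be built by the 2-step method from the connected (d,Δ)-bipartite graph H0 using the [Δ,k]-transversal design T. Let B be a block of H and let B_1, B_2, …, B_Δ be blocks of H that are not necessarily distinct but each different from B. Then there exist paths in H from B to B_1, B_2, …, B_Δ (one path from B to each B_i) such that no edge of H appears in more than one of these paths. -/
/-- The bipartite graph on `ν ⊕ β` (nodes on the left, blocks on the right)
determined by the adjacency relation `adj`. -/
def bipGraph {ν β : Type} (adj : ν → β → Prop) : SimpleGraph (ν ⊕ β) :=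
  SimpleGraph.fromRel fun u v => ∃ x b, u = Sum.inl x ∧ v = Sum.inr b ∧ adj x b

/-- A `[Δ,k]`-transversal design: the nodes form a set of size `Δ * k` partitioned
into `Δ` groups (the fibres of `group`), each of size `k`; there are `k ^ 2` blocks;
every block is adjacent to exactly one node of each group; and every pair of nodes
lying in distinct groups is adjacent to exactly one common block (the block
*generated* by the pair). -/
structure IsTransversalDesign {ν β : Type} (Δ k : ℕ)
    (group : ν → Fin Δ) (adj : ν → β → Prop) : Prop where
  two_le_k : 2 ≤ k
  two_le_Δ : 2 ≤ Δ
  groupCard : ∀ i : Fin Δ, Nat.card {x : ν // group x = i} = k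
  blockCard : Nat.card β = k ^ 2
  blockMeets : ∀ (b : β) (i : Fin Δ), ∃! x : ν, group x = i ∧ adj x b
  pairGen : ∀ x y : ν, group x ≠ group y → ∃! b : β, adj x b ∧ adj y b

/-- A family of walks (with sources `s i` and destinations `t i`) is pairwise
internally-disjoint if every vertex which is a source or destination of some member
of the family appears on members of the family only as their source or destination,
and every vertex which is not a source or destination of any member of the family
lies on at most one member of the family. -/
def PairwiseInternallyDisjoint {V ι : Type} {G : SimpleGraph V} {s t : ι → V}
    (p : (i : ι) → G.Walk (s i) (t i)) : Prop :=
  (∀ i j : ι, ∀ v : V, v ∈ (p i).support → (v = s j ∨ v = t j) → v = s i ∨ v = t i) ∧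
  (∀ i j : ι, ∀ v : V, (∀ l : ι, v ≠ s l ∧ v ≠ t l) →
    v ∈ (p i).support → v ∈ (p j).support → i = j)

/-- A family of walks is pairwise edge-disjoint if every edge lies on at most one
member of the family. -/
def PairwiseEdgeDisjoint {V ι : Type} {G : SimpleGraph V} {s t : ι → V}
    (p : (i : ι) → G.Walk (s i) (t i)) : Prop :=
  ∀ i j : ι, ∀ e : Sym2 V, e ∈ (p i).edges → e ∈ (p j).edges → i = j

/-- A `(d,Δ)`-bipartite graph: every node has degree `d` and every block has
degree (rank) `Δ`. -/
def IsBipartiteDegRank {ν β : Type} (d Δ : ℕ) (adj : ν → β → Prop) : Prop :=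
  (∀ x : ν, Nat.card {b : β // adj x b} = d) ∧
  (∀ b : β, Nat.card {x : ν // adj x b} = Δ)

/-- The bipartite graph determined by `adj` has line-diameter `l`: the maximum,
over pairs of distinct blocks, of the distance between the two blocks is `l`. -/
def HasLineDiam {ν β : Type} (adj : ν → β → Prop) (l : ℕ) : Prop :=
  (∀ b b' : β, b ≠ b' → (bipGraph adj).dist (Sum.inr b) (Sum.inr b') ≤ l) ∧
  (∃ b b' : β, b ≠ b' ∧ (bipGraph adj).dist (Sum.inr b) (Sum.inr b') = l)

/-- `adjH` describes the bipartite graph `H` built by the 2-step method from the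
bipartite graph `H0` (given by `adj0`) and the `[Δ,k]`-transversal design `T`
(given by `groupT`, `adjT`): the nodes of `H` are the pairs `(p, j)` for `p` a node
of `H0` and `j : Fin k` (so the group `G_p` is `{p} × Fin k`), the blocks of `H`
are the pairs `(Q, b)` for `Q` a block of `H0` and `b` a block of `T` (so the set
`B_Q` is `{Q} × βT`, and such sets are automatically pairwise disjoint, as are the
edge sets of the copies `T_Q`), a node `(p, j)` is adjacent in `H` to a block
`(Q, b)` only if `p` is adjacent to `Q` in `H0`, and for every block `Q` of `H0`
the nodes of the groups `G_p`, for `p` a neighbour of `Q` in `H0`, together with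
the blocks of `B_Q` form a copy `T_Q` of `T` whose `Δ` groups are these groups. -/
structure TwoStep {ν0 β0 νT βT : Type} (Δ k : ℕ)
    (adj0 : ν0 → β0 → Prop) (groupT : νT → Fin Δ) (adjT : νT → βT → Prop)
    (adjH : ν0 × Fin k → β0 × βT → Prop) : Prop where
  td : IsTransversalDesign Δ k groupT adjT
  supp : ∀ (x : ν0 × Fin k) (Q : β0) (b : βT), adjH x (Q, b) → adj0 x.1 Q
  copy : ∀ Q : β0, ∃ (enum : Fin Δ → ν0) (f : νT ≃ {x : ν0 × Fin k // adj0 x.1 Q})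
      (g : βT ≃ βT),
    Function.Injective enum ∧ (∀ i : Fin Δ, adj0 (enum i) Q) ∧
    (∀ q : ν0, adj0 q Q → ∃ i : Fin Δ, enum i = q) ∧
    (∀ x : νT, ((f x : ν0 × Fin k).1 = enum (groupT x))) ∧
    (∀ (x : νT) (b : βT), adjT x b ↔ adjH (f x : ν0 × Fin k) (Q, g b))

section EdgeMenger

/-- If every set of vertices containing `s` and closed under the darts satisfying `P`
contains `t`, then some path from `s` to `t` uses only darts satisfying `P`. -/
theorem exists_path_of_closed {V : Type} {G : SimpleGraph V} (P : G.Dart → Prop) (s t : V)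
    (h : ∀ S : Set V, s ∈ S → (∀ d : G.Dart, P d → d.fst ∈ S → d.snd ∈ S) → t ∈ S) :
    ∃ p : G.Walk s t, p.IsPath ∧ ∀ d ∈ p.darts, P d := by
  classical
  obtain ⟨p, hp⟩ := h {v | ∃ p : G.Walk s v, ∀ d ∈ p.darts, P d} ⟨.nil, by simp⟩ (by
    rintro d hd ⟨p, hp⟩
    refine ⟨p.concat d.adj, fun e he => ?_⟩
    rw [SimpleGraph.Walk.darts_concat, List.concat_eq_append, List.mem_append,
      List.mem_singleton] at he
    rcases he with he | rfl
    exacts [hp e he, hd])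
  exact ⟨p.bypass, p.bypass_isPath, fun d hd => hp d (p.darts_bypass_subset_darts hd)⟩

theorem SimpleGraph.Walk.sum_darts_map_sub {V : Type} {G : SimpleGraph V} (h : V → ℤ) {u v : V}
    (p : G.Walk u v) : (p.darts.map fun d => h d.fst - h d.snd).sum = h u - h v := by
  induction p with
  | nil => simp
  | cons a p ih => simp [ih]

theorem SimpleGraph.Walk.IsPath.darts_nodup {V : Type} {G : SimpleGraph V} {u v : V}
    {p : G.Walk u v} (hp : p.IsPath) : p.darts.Nodup :=
  List.Nodup.of_map _ hp.isTrail.edges_nodup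

open scoped Classical in
theorem SimpleGraph.Walk.IsPath.sum_darts {V : Type} {G : SimpleGraph V} (h : V → ℤ) {u v : V}
    {p : G.Walk u v} (hp : p.IsPath) :
    ∑ d ∈ p.darts.toFinset, (h d.fst - h d.snd) = h u - h v := by
  rw [List.sum_toFinset _ hp.darts_nodup, p.sum_darts_map_sub]

theorem SimpleGraph.Walk.IsPath.symm_notMem_darts {V : Type} {G : SimpleGraph V} {u v : V}
    {p : G.Walk u v} (hp : p.IsPath) {d : G.Dart} (hd : d ∈ p.darts) : d.symm ∉ p.darts := by
  intro hd'
  exact d.symm_ne (List.inj_on_of_nodup_map hp.isTrail.edges_nodup hd' hd d.edge_symm)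

/-- `F` is a unit flow in `G` from `s` delivering one unit to `t i` for each `i ∈ I`.
Conservation is expressed by testing the divergence against an arbitrary potential. -/
structure IsUnitFlow {V ι : Type} {G : SimpleGraph V} (s : V) (t : ι → V) (I : Finset ι)
    (F : Finset G.Dart) : Prop where
  symm_notMem : ∀ d ∈ F, d.symm ∉ F
  sum_eq : ∀ h : V → ℤ, ∑ d ∈ F, (h d.fst - h d.snd) = ∑ i ∈ I, (h s - h (t i))

open scoped Classical in
theorem IsUnitFlow.exists_walks {V ι : Type} {G : SimpleGraph V} {s : V} {t : ι → V}
    (I : Finset ι) : ∀ F : Finset G.Dart, IsUnitFlow s t I F →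
    ∃ p : (i : ι) → i ∈ I → G.Walk s (t i), (∀ i hi, (p i hi).IsPath) ∧
      (∀ i hi, ∀ d ∈ (p i hi).darts, d ∈ F) ∧
      ∀ i hi j hj, ∀ d ∈ (p i hi).darts, d ∈ (p j hj).darts → i = j := by
  induction I using Finset.induction_on with
  | empty => exact fun F _ => ⟨fun i hi => by simp at hi, by simp, by simp, by simp⟩
  | insert a I ha ih =>
    intro F hF
    obtain ⟨q, hq, hqF⟩ := exists_path_of_closed (· ∈ F) s (t a) (by
      intro S hs hS
      by_contra hta
      have h := hF.sum_eq fun v => if v ∈ S then 1 else 0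
      have h1 : ∑ d ∈ F, ((if d.fst ∈ S then (1 : ℤ) else 0) - if d.snd ∈ S then 1 else 0) ≤ 0 :=
        Finset.sum_nonpos fun d hd => by
          have := hS d hd
          split_ifs <;> simp_all
      have h2 : 0 ≤ ∑ i ∈ I, ((if s ∈ S then (1 : ℤ) else 0) - if t i ∈ S then 1 else 0) :=
        Finset.sum_nonneg fun i _ => by
          rw [if_pos hs]
          split_ifs <;> simp
      rw [Finset.sum_insert ha] at h
      simp only [if_pos hs, if_neg hta] at h h2
      linarith)
    have hsub : q.darts.toFinset ⊆ F := fun d hd => hqF d (by simpa using hd)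
    obtain ⟨p, hp, hpF, hdis⟩ := ih (F \ q.darts.toFinset)
      { symm_notMem := fun d hd hd' =>
          hF.symm_notMem d (Finset.sdiff_subset hd) (Finset.sdiff_subset hd')
        sum_eq := fun h => by
          have h1 := Finset.sum_sdiff (f := fun d => h d.fst - h d.snd) hsub
          rw [hq.sum_darts, hF.sum_eq, Finset.sum_insert ha] at h1
          linarith }
    have hpF' : ∀ i hi, ∀ d ∈ (p i hi).darts, d ∈ F ∧ d ∉ q.darts := by
      simpa using hpF
    have hmem : ∀ i ∈ insert a I, i ≠ a → i ∈ I := fun i hi h => by simp_all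
    refine ⟨fun i hi => if h : i = a then q.copy rfl (by rw [h]) else p i (hmem i hi h),
      ?_, ?_, ?_⟩
    · intro i hi
      beta_reduce
      split_ifs with h
      · subst h; simpa using hq
      · exact hp _ _
    · intro i hi d hd
      beta_reduce at hd
      split_ifs at hd with h
      · subst h; exact hqF d (by simpa using hd)
      · exact (hpF' _ _ d hd).1
    · intro i hi j hj d hd hd'
      beta_reduce at hd hd'
      split_ifs at hd hd' with h h' h'
      · rw [h, h']
      · subst h; exact absurd (by simpa using hd) (hpF' _ _ d hd').2
      · subst h'; exact absurd (by simpa using hd') (hpF' _ _ d hd).2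
      · exact hdis _ _ _ _ d hd hd'

open scoped Classical in
theorem IsUnitFlow.augment {V ι : Type} {G : SimpleGraph V} {s : V} {t : ι → V} {I : Finset ι}
    {F : Finset G.Dart} (hF : IsUnitFlow s t I F) {a : ι} (ha : a ∉ I)
    (hcut : ∀ S : Set V, s ∈ S → t a ∉ S →
      ∃ C : Finset G.Dart, I.card < C.card ∧ ∀ d ∈ C, d.fst ∈ S ∧ d.snd ∉ S) :
    ∃ F' : Finset G.Dart, IsUnitFlow s t (insert a I) F' := by
  obtain ⟨q, hq, hqF⟩ := exists_path_of_closed (· ∉ F) s (t a) (by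
    intro S hs hS
    by_contra hta
    obtain ⟨C, hC, hCS⟩ := hcut S hs hta
    have hCF : C ⊆ F := fun d hd => by
      by_contra hdF
      exact (hCS d hd).2 (hS d hdF (hCS d hd).1)
    have h := hF.sum_eq fun v => if v ∈ S then 1 else 0
    have h1 : (C.card : ℤ) ≤
        ∑ d ∈ F, ((if d.fst ∈ S then (1 : ℤ) else 0) - if d.snd ∈ S then 1 else 0) := by
      calc (C.card : ℤ)
          = ∑ d ∈ C, ((if d.fst ∈ S then (1 : ℤ) else 0) - if d.snd ∈ S then 1 else 0) := by
            rw [Finset.sum_congr rfl fun d hd => by rw [if_pos (hCS d hd).1, if_neg (hCS d hd).2]]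
            simp
        _ ≤ _ := Finset.sum_le_sum_of_subset_of_nonneg hCF fun d hd _ => by
            have := hS d.symm (hF.symm_notMem d hd)
            simp only [SimpleGraph.Dart.symm_toProd, Prod.fst_swap, Prod.snd_swap] at this
            split_ifs <;> simp_all
    have h2 : ∑ i ∈ I, ((if s ∈ S then (1 : ℤ) else 0) - if t i ∈ S then 1 else 0) ≤ I.card := by
      rw [Finset.card_eq_sum_ones, Nat.cast_sum]
      refine Finset.sum_le_sum fun i _ => ?_
      split_ifs <;> simp
    have : (I.card : ℤ) < C.card := by exact_mod_cast hC
    linarith)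
  set D := q.darts.toFinset with hD
  set D₁ := D.filter fun d => d.symm ∈ F
  set D₂ := D.filter fun d => d.symm ∉ F
  have hDF : ∀ d ∈ D, d ∉ F := fun d hd => hqF d (by simpa [hD] using hd)
  have hDsymm : ∀ d ∈ D, d.symm ∉ D := fun d hd => by
    simpa [hD] using hq.symm_notMem_darts (by simpa [hD] using hd)
  have hsub : D₁.image SimpleGraph.Dart.symm ⊆ F := by
    intro d hd
    obtain ⟨e, he, rfl⟩ := Finset.mem_image.1 hd
    exact (Finset.mem_filter.1 he).2
  refine ⟨(F \ D₁.image SimpleGraph.Dart.symm) ∪ D₂, ?_, ?_⟩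
  · intro d hd hd'
    rcases Finset.mem_union.1 hd with hd | hd <;> rcases Finset.mem_union.1 hd' with hd' | hd'
    · exact hF.symm_notMem d (Finset.sdiff_subset hd) (Finset.sdiff_subset hd')
    · exact (Finset.mem_filter.1 hd').2 (by simpa using Finset.sdiff_subset hd)
    · exact (Finset.mem_filter.1 hd).2 (Finset.sdiff_subset hd')
    · exact hDsymm d (Finset.mem_filter.1 hd).1 (Finset.mem_filter.1 hd').1
  · intro h
    have hdisj : Disjoint (F \ D₁.image SimpleGraph.Dart.symm) D₂ :=
      Finset.disjoint_left.2 fun d hd hd' =>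
        hDF d (Finset.mem_filter.1 hd').1 (Finset.sdiff_subset hd)
    have h1 := Finset.sum_sdiff (f := fun d => h d.fst - h d.snd) hsub
    have h2 : ∑ d ∈ D₁.image SimpleGraph.Dart.symm, (h d.fst - h d.snd) =
        -∑ d ∈ D₁, (h d.fst - h d.snd) := by
      rw [Finset.sum_image SimpleGraph.Dart.symm_involutive.injective.injOn,
        ← Finset.sum_neg_distrib]
      exact Finset.sum_congr rfl fun d _ => by simp
    have h3 : ∑ d ∈ D₁, (h d.fst - h d.snd) + ∑ d ∈ D₂, (h d.fst - h d.snd) = h s - h (t a) := by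
      rw [← hq.sum_darts h]
      exact Finset.sum_filter_add_sum_filter_not D _ _
    rw [Finset.sum_union hdisj, Finset.sum_insert ha, ← hF.sum_eq h]
    linarith

/-- One-to-many edge version of Menger's theorem: if every cut separating `s` from some `t i`
has at least as many edges as there are indices, then there are edge-disjoint paths
from `s` to all the `t i`. -/
theorem exists_edgeDisjoint_paths {V ι : Type} [Fintype ι] {G : SimpleGraph V} (s : V) (t : ι → V)
    (hcut : ∀ (S : Set V) (i : ι), s ∈ S → t i ∉ S →
      ∃ C : Finset G.Dart, Fintype.card ι ≤ C.card ∧ ∀ d ∈ C, d.fst ∈ S ∧ d.snd ∉ S) :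
    ∃ p : (i : ι) → G.Walk s (t i), (∀ i, (p i).IsPath) ∧ PairwiseEdgeDisjoint p := by
  classical
  have hflow : ∀ I : Finset ι, ∃ F : Finset G.Dart, IsUnitFlow s t I F := by
    intro I
    induction I using Finset.induction_on with
    | empty => exact ⟨∅, by simp, by simp⟩
    | insert a I ha ih =>
      obtain ⟨F, hF⟩ := ih
      refine hF.augment ha fun S hs hta => ?_
      obtain ⟨C, hC, h⟩ := hcut S a hs hta
      refine ⟨C, lt_of_lt_of_le ?_ hC, h⟩
      exact Finset.card_lt_univ_of_notMem ha
  obtain ⟨F, hF⟩ := hflow Finset.univ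
  obtain ⟨p, hp, hpF, hdis⟩ := hF.exists_walks
  refine ⟨fun i => p i (Finset.mem_univ i), fun i => hp _ _, fun i j e hi hj => ?_⟩
  obtain ⟨d, hd, rfl⟩ := List.mem_map.1 hi
  obtain ⟨d', hd', he⟩ := List.mem_map.1 hj
  rcases SimpleGraph.dart_edge_eq_iff d' d |>.1 he with rfl | rfl
  · exact hdis _ _ _ _ _ hd hd'
  · exact absurd (hpF _ _ _ hd') (hF.symm_notMem _ (hpF _ _ _ hd))

end EdgeMenger

section TransversalDesign

variable {ν β : Type} {Δ k : ℕ} {group : ν → Fin Δ} {adj : ν → β → Prop}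

theorem IsTransversalDesign.exists_ne (td : IsTransversalDesign Δ k group adj) (i : Fin Δ) :
    ∃ j, j ≠ i := by
  have := Fin.nontrivial_iff_two_le.2 td.two_le_Δ
  exact _root_.exists_ne i

theorem IsTransversalDesign.exists_injective_group (td : IsTransversalDesign Δ k group adj)
    (hΔk : Δ ≤ k) (j : Fin Δ) :
    ∃ e : Fin Δ → ν, Function.Injective e ∧ ∀ l, group (e l) = j := by
  have hk := td.two_le_k
  have : Finite {x : ν // group x = j} :=
    Nat.finite_of_card_ne_zero (by rw [td.groupCard]; omega)
  let φ := (Finite.equivFinOfCardEq (td.groupCard j)).symm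
  exact ⟨fun l => φ (Fin.castLE hΔk l),
    Subtype.val_injective.comp (φ.injective.comp (Fin.castLE_injective hΔk)), fun l => (φ _).2⟩

theorem IsTransversalDesign.exists_injective_blocks (td : IsTransversalDesign Δ k group adj)
    (hΔk : Δ ≤ k) (x : ν) : ∃ E : Fin Δ → β, Function.Injective E ∧ ∀ l, adj x (E l) := by
  obtain ⟨j, hj⟩ := td.exists_ne (group x)
  obtain ⟨e, he, hej⟩ := td.exists_injective_group hΔk j
  choose E hE using fun l => (td.pairGen x (e l) (by rw [hej]; exact hj.symm)).exists
  refine ⟨E, fun l l' h => he ?_, fun l => (hE l).1⟩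
  exact (td.blockMeets (E l) j).unique ⟨hej l, (hE l).2⟩ ⟨hej l', h ▸ (hE l').2⟩

/-- A transversal design with `Δ ≤ k` is `Δ`-edge-connected. -/
theorem IsTransversalDesign.exists_cut (td : IsTransversalDesign Δ k group adj)
    (hΔk : Δ ≤ k) (A : Set ν) (C : Set β) :
    (∃ E : Fin Δ → ν × β, Function.Injective E ∧
      ∀ l, adj (E l).1 (E l).2 ∧ ¬((E l).1 ∈ A ↔ (E l).2 ∈ C)) ∨
    ((∀ x, x ∈ A) ∧ ∀ b, b ∈ C) ∨ ((∀ x, x ∉ A) ∧ ∀ b, b ∉ C) := by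
  by_cases h : ∀ i : Fin Δ, ∃ e : ν × β, group e.1 = i ∧ adj e.1 e.2 ∧ ¬(e.1 ∈ A ↔ e.2 ∈ C)
  · choose E hE using h
    exact .inl ⟨E, fun l l' h => by rw [← (hE l).1, ← (hE l').1, h], fun l => (hE l).2⟩
  push Not at h
  obtain ⟨i, hi⟩ := h
  replace hi : ∀ x b, group x = i → adj x b → (x ∈ A ↔ b ∈ C) := by
    intro x b hx hb
    have := hi (x, b) hx hb
    tauto
  have star : ∀ x, (∀ b, ¬(x ∈ A ↔ b ∈ C)) → ∃ E : Fin Δ → ν × β, Function.Injective E ∧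
      ∀ l, adj (E l).1 (E l).2 ∧ ¬((E l).1 ∈ A ↔ (E l).2 ∈ C) := by
    intro x hx
    obtain ⟨E, hE, hadj⟩ := td.exists_injective_blocks hΔk x
    exact ⟨fun l => (x, E l), fun l l' h => hE (Prod.ext_iff.1 h).2, fun l => ⟨hadj l, hx _⟩⟩
  by_cases hin : ∀ x, group x = i → x ∈ A
  · have hC : ∀ b, b ∈ C := fun b => by
      obtain ⟨x, hx, hb⟩ := (td.blockMeets b i).exists
      exact (hi x b hx hb).1 (hin x hx)
    by_cases hA : ∀ x, x ∈ A
    · exact .inr (.inl ⟨hA, hC⟩)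
    · push Not at hA
      obtain ⟨x, hx⟩ := hA
      exact .inl (star x fun b => by simp [hx, hC b])
  by_cases hout : ∀ x, group x = i → x ∉ A
  · have hC : ∀ b, b ∉ C := fun b => by
      obtain ⟨x, hx, hb⟩ := (td.blockMeets b i).exists
      exact fun h => hout x hx ((hi x b hx hb).2 h)
    by_cases hA : ∀ x, x ∉ A
    · exact .inr (.inr ⟨hA, hC⟩)
    · push Not at hA
      obtain ⟨x, hx⟩ := hA
      exact .inl (star x fun b => by simp [hx, hC b])
  push Not at hin hout
  obtain ⟨y, hyi, hy⟩ := hin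
  obtain ⟨x, hxi, hx⟩ := hout
  obtain ⟨j, hj⟩ := td.exists_ne i
  obtain ⟨e, he, hej⟩ := td.exists_injective_group hΔk j
  have hb : ∀ l, ∃ b, adj (e l) b ∧ ¬(e l ∈ A ↔ b ∈ C) := by
    intro l
    obtain ⟨b, hb, hb'⟩ := (td.pairGen x (e l) (by rw [hej, hxi]; exact hj.symm)).exists
    obtain ⟨c, hc, hc'⟩ := (td.pairGen y (e l) (by rw [hej, hyi]; exact hj.symm)).exists
    have h1 := hi x b hxi hb
    have h2 := hi y c hyi hc
    by_cases hl : e l ∈ A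
    · exact ⟨c, hc', by tauto⟩
    · exact ⟨b, hb', by tauto⟩
  choose b hb using hb
  exact .inl ⟨fun l => (e l, b l), fun l l' h => he (Prod.ext_iff.1 h).1, hb⟩

end TransversalDesign

theorem bipGraph_adj_inl_inr {ν β : Type} {adj : ν → β → Prop} {x : ν} {b : β} :
    (bipGraph adj).Adj (.inl x) (.inr b) ↔ adj x b := by
  simp [bipGraph]

/-- A family of distinct edges joining the two sides of a cut gives equally many darts
leaving it. -/
theorem exists_darts_of_edges {ν β : Type} {adj : ν → β → Prop} {n : ℕ} (S : Set (ν ⊕ β))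
    (E : Fin n → ν × β) (hE : Function.Injective E)
    (h : ∀ l, adj (E l).1 (E l).2 ∧ ¬(Sum.inl (E l).1 ∈ S ↔ Sum.inr (E l).2 ∈ S)) :
    ∃ C : Finset (bipGraph adj).Dart, n ≤ C.card ∧ ∀ d ∈ C, d.fst ∈ S ∧ d.snd ∉ S := by
  classical
  have hd : ∀ l, ∃ d : (bipGraph adj).Dart,
      d.edge = s(.inl (E l).1, .inr (E l).2) ∧ d.fst ∈ S ∧ d.snd ∉ S := by
    intro l
    have ha := bipGraph_adj_inl_inr.2 (h l).1
    by_cases hl : Sum.inl (E l).1 ∈ S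
    · exact ⟨⟨(_, _), ha⟩, rfl, hl, fun hr => (h l).2 (by simp [hl, hr])⟩
    · exact ⟨⟨(_, _), ha.symm⟩, Sym2.eq_swap, by have := (h l).2; tauto, hl⟩
  choose d hd hS using hd
  have hinj : Function.Injective d := fun l l' hl => hE (by
    have := (hd l).symm.trans ((congrArg _ hl).trans (hd l'))
    simpa [Prod.ext_iff] using this)
  refine ⟨Finset.univ.image d, by simp [Finset.card_image_of_injective _ hinj], ?_⟩
  intro e he
  obtain ⟨l, -, rfl⟩ := Finset.mem_image.1 he
  exact hS l

/-- A set of vertices of `H` either has at least `Δ` edges of a copy `T_Q` in its boundary,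
or contains `T_Q`, or avoids it. -/
theorem TwoStep.exists_cut {ν0 β0 νT βT : Type} {Δ k : ℕ} {adj0 : ν0 → β0 → Prop}
    {groupT : νT → Fin Δ} {adjT : νT → βT → Prop} {adjH : ν0 × Fin k → β0 × βT → Prop}
    (h2 : TwoStep Δ k adj0 groupT adjT adjH) (hΔk : Δ ≤ k)
    (S : Set ((ν0 × Fin k) ⊕ (β0 × βT))) (Q : β0) :
    (∃ C : Finset (bipGraph adjH).Dart, Δ ≤ C.card ∧ ∀ d ∈ C, d.fst ∈ S ∧ d.snd ∉ S) ∨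
    ((∀ x : ν0 × Fin k, adj0 x.1 Q → Sum.inl x ∈ S) ∧ ∀ b : βT, Sum.inr (Q, b) ∈ S) ∨
    ((∀ x : ν0 × Fin k, adj0 x.1 Q → Sum.inl x ∉ S) ∧ ∀ b : βT, Sum.inr (Q, b) ∉ S) := by
  obtain ⟨-, f, g, -, -, -, -, hadj⟩ := h2.copy Q
  rcases h2.td.exists_cut hΔk {x | Sum.inl (f x : ν0 × Fin k) ∈ S} {b | Sum.inr (Q, g b) ∈ S} with
    ⟨E, hE, hES⟩ | ⟨hA, hC⟩ | ⟨hA, hC⟩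
  · refine .inl (exists_darts_of_edges S (fun l => (f (E l).1, (Q, g (E l).2))) ?_ fun l =>
      ⟨(hadj _ _).1 (hES l).1, (hES l).2⟩)
    intro l l' h
    simp only [Prod.mk.injEq, true_and, g.apply_eq_iff_eq] at h
    exact hE (Prod.ext (f.injective (Subtype.ext h.1)) h.2)
  · refine .inr (.inl ⟨fun x hx => ?_, fun b => ?_⟩)
    · simpa using hA (f.symm ⟨x, hx⟩)
    · simpa using hC (g.symm b)
  · refine .inr (.inr ⟨fun x hx => ?_, fun b => ?_⟩)
    · simpa using hA (f.symm ⟨x, hx⟩)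
    · simpa using hC (g.symm b)

/-- Let `k, Δ, d ≥ 2` with `Δ ≤ k`, and let `H` (given by `adjH`) be
built by the 2-step method from the connected `(d,Δ)`-bipartite graph `H0` using
the `[Δ,k]`-transversal design `T`.  Let `B` be a block of `H` and let
`Bs 1, …, Bs Δ` be blocks of `H`, not necessarily distinct but each different from
`B`.  Then there exist paths in `H` from `B` to each `Bs i` such that no edge of
`H` appears in more than one of these paths. -/
theorem twoStep_one_to_many {ν0 β0 νT βT : Type} (d Δ k : ℕ)
    (hd : 2 ≤ d) (hΔ : 2 ≤ Δ) (hk : 2 ≤ k) (hΔk : Δ ≤ k)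
    (adj0 : ν0 → β0 → Prop) (groupT : νT → Fin Δ) (adjT : νT → βT → Prop)
    (adjH : ν0 × Fin k → β0 × βT → Prop)
    (hH0 : IsBipartiteDegRank d Δ adj0)
    (hconn : (bipGraph adj0).Connected)
    (h2 : TwoStep Δ k adj0 groupT adjT adjH)
    (B : β0 × βT) (Bs : Fin Δ → β0 × βT) (hBs : ∀ i, Bs i ≠ B) :
    ∃ p : (i : Fin Δ) → (bipGraph adjH).Walk (Sum.inr B) (Sum.inr (Bs i)),
      (∀ i, (p i).IsPath) ∧ PairwiseEdgeDisjoint p := by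
  refine exists_edgeDisjoint_paths (Sum.inr B) (fun i => Sum.inr (Bs i)) fun S i hB hBi => ?_
  rw [Fintype.card_fin]
  by_contra hno
  have key := fun Q => (h2.exists_cut hΔk S Q).resolve_left hno
  let P : ν0 ⊕ β0 → Prop :=
    Sum.elim (fun p => ∀ j, Sum.inl (p, j) ∈ S) fun Q => ∀ b, Sum.inr (Q, b) ∈ S
  have hstep : ∀ p Q, adj0 p Q → (P (.inl p) ↔ P (.inr Q)) := by
    intro p Q hpQ
    rcases key Q with ⟨hx, hb⟩ | ⟨hx, hb⟩
    · exact ⟨fun _ => hb, fun _ j => hx _ hpQ⟩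
    · exact ⟨fun h => absurd (h ⟨0, by omega⟩) (hx _ hpQ), fun h => absurd (h B.2) (hb B.2)⟩
  have hadj : ∀ u v, (bipGraph adj0).Adj u v → P u → P v := by
    rintro u v ⟨-, ⟨p, Q, rfl, rfl, h⟩ | ⟨p, Q, rfl, rfl, h⟩⟩
    · exact (hstep p Q h).1
    · exact (hstep p Q h).2
  have hwalk : ∀ u v, (bipGraph adj0).Walk u v → P u → P v := by
    intro u v p
    induction p with
    | nil => exact id
    | cons h _ ih => exact fun hu => ih (hadj _ _ h hu)
  have hPB : P (.inr B.1) := (key B.1).elim (fun h => h.2) fun h => absurd hB (h.2 B.2)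
  obtain ⟨w⟩ := hconn.preconnected (.inr B.1) (.inr (Bs i).1)
  exact hBi (hwalk _ _ w hPB (Bs i).2)
end

section
/- Let k, Δ, d ≥ 2 with Δ ≤ k, and let H be built by the 2-step method from the connected (d,Δ)-bipartite graph H0 using the [Δ,k]-transversal design T. Let B be a block of H lying in the set B_{Q_0} for a block Q_0 of H0, and let B_1, B_2, …, B_Δ be blocks of H, not necessarily distinct but each different from B. Suppose that Z is a subtree of H0 rooted at Q_0 such that every block Q of H0 with some B_i ∈ B_Q is a vertex of Z, every leaf of Z is such a block, and Z has depth h (measured in edges of the bipartite graph H0, so that h is even). Then there exist pairwise edge-disjoint paths in H from B to B_1, B_2, …, B_Δ (one path from B to each B_i), each of length at most 3h/2 + 7. -/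
/-- `v` is reachable from `u` by a walk of length at most `n`. -/
def HasWalk {V : Type} (G : SimpleGraph V) (u v : V) (n : ℕ) : Prop :=
  ∃ w : G.Walk u v, w.length ≤ n

namespace HasWalk

variable {V W : Type} {G : SimpleGraph V} {u v w : V} {m n : ℕ}

lemma refl (G : SimpleGraph V) (u : V) (n : ℕ) : HasWalk G u u n :=
  ⟨SimpleGraph.Walk.nil, Nat.zero_le _⟩

lemma trans (h : HasWalk G u v m) (h' : HasWalk G v w n) : HasWalk G u w (m + n) := by
  obtain ⟨p, hp⟩ := h
  obtain ⟨q, hq⟩ := h'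
  exact ⟨p.append q, by rw [SimpleGraph.Walk.length_append]; omega⟩

lemma of_adj (h : G.Adj u v) : HasWalk G u v 1 :=
  ⟨h.toWalk, by simp⟩

lemma mono_length (h : HasWalk G u v m) (hmn : m ≤ n) : HasWalk G u v n := by
  obtain ⟨p, hp⟩ := h
  exact ⟨p, hp.trans hmn⟩

lemma map {G' : SimpleGraph W} (h : HasWalk G u v n) (f : G →g G') :
    HasWalk G' (f u) (f v) n := by
  obtain ⟨p, hp⟩ := h
  exact ⟨p.map f, by simpa using hp⟩

end HasWalk

section BipGraph

variable {ν β : Type} {R S : ν → β → Prop}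

lemma bipGraph_adj_iff {u v : ν ⊕ β} : (bipGraph R).Adj u v ↔
    ∃ x b, R x b ∧ ((u = Sum.inl x ∧ v = Sum.inr b) ∨ (v = Sum.inl x ∧ u = Sum.inr b)) := by
  unfold bipGraph
  rw [SimpleGraph.fromRel_adj]
  constructor
  · rintro ⟨-, ⟨x, b, h1, h2, h3⟩ | ⟨x, b, h1, h2, h3⟩⟩
    · exact ⟨x, b, h3, Or.inl ⟨h1, h2⟩⟩
    · exact ⟨x, b, h3, Or.inr ⟨h1, h2⟩⟩
  · rintro ⟨x, b, h, ⟨rfl, rfl⟩ | ⟨rfl, rfl⟩⟩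
    · exact ⟨by simp, Or.inl ⟨x, b, rfl, rfl, h⟩⟩
    · exact ⟨by simp, Or.inr ⟨x, b, rfl, rfl, h⟩⟩

lemma bipGraph_adj_inr_inl {x : ν} {b : β} :
    (bipGraph R).Adj (Sum.inr b) (Sum.inl x) ↔ R x b := by
  simp [bipGraph_adj_iff]

lemma bipGraph_adj_inl_inr_s17 {x : ν} {b : β} :
    (bipGraph R).Adj (Sum.inl x) (Sum.inr b) ↔ R x b := by
  simp [bipGraph_adj_iff]

lemma bipGraph_mono (h : ∀ x b, R x b → S x b) : bipGraph R ≤ bipGraph S := by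
  intro u v
  simp only [bipGraph_adj_iff]
  rintro ⟨x, b, hR, huv⟩
  exact ⟨x, b, h x b hR, huv⟩

lemma HasWalk.mono_rel {u v : ν ⊕ β} {n : ℕ} (h : HasWalk (bipGraph R) u v n)
    (hRS : ∀ x b, R x b → S x b) : HasWalk (bipGraph S) u v n :=
  h.map (SimpleGraph.Hom.ofLE (bipGraph_mono hRS))

/-- A walk of length two from node to node through a common block. -/
lemma HasWalk.through_block {x y : ν} {b : β} (hx : R x b) (hy : R y b) :
    HasWalk (bipGraph R) (Sum.inl x) (Sum.inl y) 2 :=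
  (HasWalk.of_adj (bipGraph_adj_inl_inr_s17.2 hx)).trans
    (HasWalk.of_adj (bipGraph_adj_inr_inl.2 hy))

/-- The homomorphism of bipartite graphs given by a map of nodes and a map of blocks. -/
def bipGraphHom {ν' β' : Type} {R' : ν' → β' → Prop} (f : ν → ν') (g : β → β')
    (h : ∀ x b, R x b → R' (f x) (g b)) : bipGraph R →g bipGraph R' where
  toFun := Sum.map f g
  map_rel' := by
    intro u v
    simp only [bipGraph_adj_iff]
    rintro ⟨x, b, hR, ⟨rfl, rfl⟩ | ⟨rfl, rfl⟩⟩
    · exact ⟨f x, g b, h x b hR, by simp⟩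
    · exact ⟨f x, g b, h x b hR, by simp⟩

/-- Walks confined to pairwise disjoint sets of edges yield edge-disjoint paths. -/
lemma exists_edgeDisjoint_paths_s17 {ι : Type} {adj : ν → β → Prop}
    {s t : ι → ν ⊕ β} {n : ℕ} (R : ι → ν → β → Prop)
    (hadj : ∀ i x b, R i x b → adj x b)
    (hdisj : ∀ i j x b, R i x b → R j x b → i = j)
    (hwalk : ∀ i, HasWalk (bipGraph (R i)) (s i) (t i) n) :
    ∃ p : (i : ι) → (bipGraph adj).Walk (s i) (t i),
      (∀ i, (p i).IsPath ∧ (p i).length ≤ n) ∧ PairwiseEdgeDisjoint p := by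
  classical
  choose w hw using hwalk
  refine ⟨fun i => ((w i).mapLe (bipGraph_mono (hadj i))).bypass, fun i =>
    ⟨SimpleGraph.Walk.bypass_isPath _, (SimpleGraph.Walk.length_bypass_le_length _).trans ?_⟩, ?_⟩
  · simpa using hw i
  · have key : ∀ i e, e ∈ ((w i).mapLe (bipGraph_mono (hadj i))).bypass.edges →
        ∃ x b, R i x b ∧ e = s(Sum.inl x, Sum.inr b) := by
      intro i e he
      have he' := SimpleGraph.Walk.edges_bypass_subset_edges _ he
      rw [SimpleGraph.Walk.edges_mapLe_eq_edges] at he'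
      have := SimpleGraph.Walk.edges_subset_edgeSet _ he'
      induction e using Sym2.ind with
      | _ u v =>
        obtain ⟨x, b, hR, ⟨rfl, rfl⟩ | ⟨rfl, rfl⟩⟩ := bipGraph_adj_iff.1 this
        · exact ⟨x, b, hR, rfl⟩
        · exact ⟨x, b, hR, Sym2.eq_swap⟩
    intro i j e hi hj
    obtain ⟨x, b, hR, rfl⟩ := key i e hi
    obtain ⟨x', b', hR', h⟩ := key j _ hj
    simp only [Sym2.eq_iff, Sum.inl.injEq, Sum.inr.injEq, reduceCtorEq, and_self, or_false] at h
    obtain ⟨rfl, rfl⟩ := h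
    exact hdisj i j x b hR hR'

end BipGraph

/-- `L b g` is the coordinate of the node of group `g` on the block `b`; two coordinates in
distinct groups determine the block. -/
def IsOrthogonalArray {ι κ β : Type} (L : β → ι → κ) : Prop :=
  ∀ g g', g ≠ g' → ∀ j j', ∃! b, L b g = j ∧ L b g' = j'

/-- A functional relation from `Fin m` to `Fin n`, `m ≤ n`, is met by an injection at every
value it attains. -/
lemma exists_injective_section {m n : ℕ} (hmn : m ≤ n) (P : Fin m → Fin n → Prop)
    (hP : ∀ i a b, P i a → P i b → a = b) :
    ∃ σ : Fin m → Fin n, Function.Injective σ ∧ ∀ a, (∃ i, P i a) → ∃ i, P i a ∧ σ i = a := by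
  classical
  choose s hs using fun a : {a // ∃ i, P i a} => a.2
  let f : Fin m → Fin n := fun i => if h : ∃ a, P i a then h.choose else Fin.castLE hmn i
  have hf : ∀ a, f (s a) = a := by
    intro a
    have h : ∃ b, P (s a) b := ⟨a, hs a⟩
    simp only [f, dif_pos h]
    exact hP _ _ _ h.choose_spec (hs a)
  have hinj : Set.InjOn f (Set.range s) := by
    rintro _ ⟨a, rfl⟩ _ ⟨b, rfl⟩ hab
    rw [hf, hf] at hab
    rw [Subtype.ext hab]
  obtain ⟨t, hft, -, ht⟩ := Finset.exists_subsuperset_card_eq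
    (Finset.subset_univ ((Set.range s).toFinset.image f)) (n := m)
    (Finset.card_image_le.trans ((Finset.card_le_univ _).trans (by simp))) (by simpa using hmn)
  obtain ⟨σ, hσ⟩ := Finset.exists_equiv_extend_of_card_eq (by simpa using ht.symm) hft
    (by simpa using hinj)
  refine ⟨fun i => σ i, fun i j hij => σ.injective (Subtype.ext hij), fun a ha => ?_⟩
  exact ⟨s ⟨a, ha⟩, hs ⟨a, ha⟩, (hσ _ (by simp)).trans (hf ⟨a, ha⟩)⟩

/-- Tasks are assigned to groups: wherever possible a group `g` receives a task `i` with `C i g`,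
and if some other task is assigned to its forbidden group then that group is forbidden for
all the tasks that do not fit their groups. -/
lemma exists_assignment {n : ℕ} (C A : Fin n → Fin n → Prop)
    (hC : ∀ i a b, C i a → C i b → a = b) (hA : ∀ i a b, A i a → A i b → a = b) :
    ∃ π : Fin n → Fin n, Function.Injective π ∧
      (∀ g, (∃ i, C i g) → ∃ i, C i g ∧ π i = g) ∧
      ∀ i, ¬C i (π i) → A i (π i) → ∀ j, j ≠ i → ¬C j (π j) → A j (π i) := by
  classical
  let bad : (Fin n → Fin n) → Finset (Fin n) := fun π => {i | ¬C i (π i) ∧ A i (π i)}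
  let good : Finset (Fin n → Fin n) := {π | Function.Injective π ∧
      ∀ g, (∃ i, C i g) → ∃ i, C i g ∧ π i = g}
  obtain ⟨π₀, h₀⟩ := exists_injective_section le_rfl C hC
  obtain ⟨π, hπ, hmin⟩ := good.exists_min_image (fun π => (bad π).card)
    ⟨π₀, by simpa [good] using h₀⟩
  simp only [good, Finset.mem_filter, Finset.mem_univ, true_and] at hπ hmin
  refine ⟨π, hπ.1, hπ.2, fun i hCi hAi j hji hCj => ?_⟩
  by_contra hAj
  refine absurd (hmin (π ∘ Equiv.swap i j) ⟨hπ.1.comp (Equiv.injective _), fun g hg => ?_⟩) ?_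
  · obtain ⟨l, hl, rfl⟩ := hπ.2 g hg
    refine ⟨l, hl, ?_⟩
    have hli : l ≠ i := by rintro rfl; exact hCi hl
    have hlj : l ≠ j := by rintro rfl; exact hCj hl
    simp [Equiv.swap_apply_of_ne_of_ne hli hlj]
  · rw [not_le]
    apply Finset.card_lt_card
    rw [Finset.ssubset_iff_of_subset]
    · refine ⟨i, by simp [bad, hCi, hAi], ?_⟩
      simp only [bad, Finset.mem_filter, Finset.mem_univ, true_and, Function.comp_apply,
        Equiv.swap_apply_left, not_and]
      exact fun _ h => hji (hπ.1 (hA _ _ _ h hAi))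
    · intro l
      simp only [bad, Finset.mem_filter, Finset.mem_univ, true_and, Function.comp_apply]
      rintro ⟨h1, h2⟩
      by_cases hli : l = i
      · subst hli; exact ⟨hCi, hAi⟩
      by_cases hlj : l = j
      · subst hlj
        rw [Equiv.swap_apply_right] at h2
        exact absurd h2 hAj
      · rw [Equiv.swap_apply_of_ne_of_ne hli hlj] at h1 h2
        exact ⟨h1, h2⟩

/-- A permutation fixing a prescribed point (if any) and, apart from the degenerate case of two
elements, no other. -/
lemma exists_perm_fixing {n : ℕ} (hn : 2 ≤ n) (F : Fin n → Prop)
    (hF : ∀ a b, F a → F b → a = b) :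
    ∃ τ : Equiv.Perm (Fin n), (∀ g, F g → τ g = g) ∧
      ∀ a, τ a = a → ¬F a → n = 2 ∧ ∃ g, F g := by
  obtain ⟨n, rfl⟩ : ∃ m, n = m + 2 := ⟨n - 2, by omega⟩
  have hrot : ∀ a : Fin (n + 2), a + 1 ≠ a := by
    intro a h
    simp at h
  by_cases h : ∃ g, F g
  · obtain ⟨g, hg⟩ := h
    refine ⟨(Equiv.addRight 1).trans (Equiv.swap g (g + 1)), fun b hb => ?_, fun a ha hFa => ?_⟩
    · rw [hF b g hb hg]
      simp
    · refine ⟨?_, g, hg⟩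
      have hag : a ≠ g := by rintro rfl; exact hFa hg
      simp only [Equiv.trans_apply, Equiv.coe_addRight] at ha
      by_cases h1 : a + 1 = g
      · rw [h1, Equiv.swap_apply_left] at ha
        subst ha
        have h2 : g + (1 + 1) = g := by rw [← add_assoc]; exact h1
        have h3 : (1 + 1 : Fin (n + 2)) = 0 := by simpa using h2
        have h4 := congrArg Fin.val h3
        rw [Fin.val_add] at h4
        simp at h4
        have := Nat.le_of_dvd two_pos (Nat.dvd_of_mod_eq_zero h4)
        omega
      · rw [Equiv.swap_apply_of_ne_of_ne h1 (by simpa using hag)] at ha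
        exact absurd ha (hrot a)
  · exact ⟨Equiv.addRight 1, fun g hg => absurd ⟨g, hg⟩ h, fun a ha => absurd ha (hrot a)⟩

section OrthogonalArray

variable {Δ k : ℕ} {β : Type} {L : β → Fin Δ → Fin k}

lemma IsOrthogonalArray.eq_of_coord_eq (hL : IsOrthogonalArray L) {b c : β} {g g' : Fin Δ}
    (hg : g ≠ g') (h : L b g = L c g) (h' : L b g' = L c g') : b = c :=
  (hL g g' hg _ _).unique ⟨h, h'⟩ ⟨rfl, rfl⟩

/-- Through a node off the block `B` there is a block disjoint from `B`. -/
lemma IsOrthogonalArray.exists_block_disjoint (hL : IsOrthogonalArray L) (hΔ : 2 ≤ Δ)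
    (hΔk : Δ ≤ k) (B : β) (γ : Fin Δ) (l : Fin k) (hl : l ≠ L B γ) :
    ∃ c, L c γ = l ∧ ∀ g, L c g ≠ L B g := by
  have : Nontrivial (Fin Δ) := Fin.nontrivial_iff_two_le.2 hΔ
  obtain ⟨g', hg'⟩ := exists_ne γ
  choose c hc using fun j => (hL γ g' hg'.symm l j).exists
  by_contra! hmeet
  choose m hm using fun j => hmeet (c j) (hc j).1
  have hmγ : ∀ j, m j ≠ γ := by
    intro j h
    apply hl
    rw [← (hc j).1, ← h, hm j]
  have hinj : Function.Injective (fun j => (⟨m j, hmγ j⟩ : {g // g ≠ γ})) := by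
    intro j j' h
    have h' : m j = m j' := congrArg Subtype.val h
    have hcc : c j = c j' := hL.eq_of_coord_eq (hmγ j) (by rw [hm j, h', hm j'])
      (by rw [(hc j).1, (hc j').1])
    rw [← (hc j).2, hcc, (hc j').2]
  have := Fintype.card_le_of_injective _ hinj
  simp at this
  omega

/-- Combinatorial data of an edge-disjoint routing from the block `B` to the targets `t`: the path
to `t i` leaves `B` through its node in the group `π i`; a `direct` path has no further node, and
any other path visits `y i` last. -/
structure RoutingPlan (L : β → Fin Δ → Fin k) (B : β) (t : Fin Δ → (Fin Δ × Fin k) ⊕ β)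
    (π : Fin Δ → Fin Δ) (direct : Fin Δ → Prop) (y : Fin Δ → Fin Δ × Fin k) : Prop where
  inj : Function.Injective π
  block_ne : ∀ i b, t i = Sum.inr b → b ≠ B
  direct_target : ∀ i, direct i → t i = Sum.inl (π i, L B (π i)) ∨
    ∃ b, t i = Sum.inr b ∧ L b (π i) = L B (π i)
  not_meet : ∀ i j b, ¬direct i → t j = Sum.inr b → L b (π i) ≠ L B (π i)
  off : ∀ i, ¬direct i → (y i).2 ≠ L B (y i).1
  node : ∀ i x, t i = Sum.inl x → y i = x
  block : ∀ i b, t i = Sum.inr b → L b (y i).1 = (y i).2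
  sep : ∀ i j b, t i = Sum.inr b → t j = Sum.inr b → y i = y j → i = j
  detour : ∀ i, ¬direct i → (y i).1 = π i → ∀ j, j ≠ i → ¬direct j → ∃ l, t j = Sum.inl (π i, l)

lemma IsOrthogonalArray.eq_of_meet (hL : IsOrthogonalArray L) {B b : β} {g g' : Fin Δ}
    (hb : b ≠ B) (h : L b g = L B g) (h' : L b g' = L B g') : g = g' := by
  by_contra hg
  exact hb (hL.eq_of_coord_eq hg h h')

lemma IsOrthogonalArray.exists_routingPlan (hL : IsOrthogonalArray L) (hΔ : 2 ≤ Δ)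
    (B : β) (t : Fin Δ → (Fin Δ × Fin k) ⊕ β) (htB : ∀ i, t i ≠ Sum.inr B)
    (htinj : ∀ i j x, t i = Sum.inl x → t j = Sum.inl x → i = j) :
    ∃ π direct y, RoutingPlan L B t π direct y := by
  classical
  let P : Fin Δ → Fin Δ → Prop := fun i g =>
    t i = Sum.inl (g, L B g) ∨ ∃ b, t i = Sum.inr b ∧ L b g = L B g
  let C : Fin Δ → Fin Δ → Prop := fun i g =>
    P i g ∧ ∀ j, t j = Sum.inl (g, L B g) → j = i
  let A : Fin Δ → Fin Δ → Prop := fun i g => ∃ l, t i = Sum.inl (g, l)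
  have hP : ∀ i a b, P i a → P i b → a = b := by
    rintro i a b (h | ⟨c, h, hc⟩) (h' | ⟨c', h', hc'⟩)
    · simp_all
    · simp_all
    · simp_all
    · obtain rfl : c = c' := by simp_all
      exact hL.eq_of_meet (by rintro rfl; exact htB i h) hc hc'
  have hPC : ∀ g, (∃ i, P i g) → ∃ i, C i g := by
    rintro g ⟨i, hi⟩
    by_cases h : ∃ j, t j = Sum.inl (g, L B g)
    · obtain ⟨j, hj⟩ := h
      exact ⟨j, Or.inl hj, fun j' hj' => htinj _ _ _ hj' hj⟩
    · exact ⟨i, hi, fun j hj => absurd ⟨j, hj⟩ h⟩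
  obtain ⟨π, hπ, hsec, hbad⟩ := exists_assignment C A (fun i a b ha hb => hP i a b ha.1 hb.1)
    (by rintro i a b ⟨l, hl⟩ ⟨l', hl'⟩; simp_all)
  have hP' : ∀ g, (∃ i, P i g) → ∃ i, C i g ∧ π i = g := fun g h => hsec g (hPC g h)
  have hτ : ∀ b, ∃ τ : Equiv.Perm (Fin Δ), b ≠ B → (∀ g, L b g = L B g → τ g = g) ∧
      ∀ a, τ a = a → L b a ≠ L B a → Δ = 2 ∧ ∃ g, L b g = L B g := by
    intro b
    by_cases hb : b = B
    · exact ⟨1, fun h => absurd hb h⟩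
    · obtain ⟨τ, h⟩ := exists_perm_fixing hΔ (fun g => L b g = L B g) (fun g g' => hL.eq_of_meet hb)
      exact ⟨τ, fun _ => h⟩
  choose τ hτ using hτ
  let y : Fin Δ → Fin Δ × Fin k := fun i =>
    Sum.elim id (fun b => (τ b (π i), L b (τ b (π i)))) (t i)
  have hnode : ∀ i x, t i = Sum.inl x → y i = x := by
    intro i x h
    simp [y, h]
  have hblock : ∀ i b, t i = Sum.inr b → y i = (τ b (π i), L b (τ b (π i))) := by
    intro i b h
    simp [y, h]
  have hne : ∀ i b, t i = Sum.inr b → b ≠ B := by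
    rintro i b h rfl
    exact htB i h
  have hCmeet : ∀ i j b, ¬C i (π i) → t j = Sum.inr b → L b (π i) ≠ L B (π i) := by
    intro i j b hi hj h
    obtain ⟨i', h1, h2⟩ := hP' (π i) ⟨j, Or.inr ⟨b, hj, h⟩⟩
    rw [hπ h2] at h1
    exact hi h1
  have hyB : ∀ i, ¬C i (π i) → (y i).2 ≠ L B (y i).1 := by
    intro i hi h
    rcases hti : t i with x | b
    · rw [hnode i x hti] at h
      have hx : t i = Sum.inl (x.1, L B x.1) := by rw [hti, ← h]
      obtain ⟨i', h1, h2⟩ := hP' x.1 ⟨i, Or.inl hx⟩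
      have := h1.2 i hx
      subst this
      rw [← h2] at h1
      exact hi h1
    · rw [hblock i b hti] at h
      have h1 := (hτ b (hne i b hti)).1 _ h
      have h2 := (τ b).injective h1
      simp only [h2] at h
      exact hCmeet i i b hi hti h
  have hdetour : ∀ i, ¬C i (π i) → (y i).1 = π i → ∀ j, j ≠ i → ¬C j (π j) → A j (π i) := by
    intro i hi hyi j hji hj
    rcases hti : t i with x | b
    · rw [hnode i x hti] at hyi
      exact hbad i hi ⟨x.2, by rw [hti, ← hyi]⟩ j hji hj
    · rw [hblock i b hti] at hyi
      obtain ⟨h2, g, hg⟩ := (hτ b (hne i b hti)).2 _ hyi (hCmeet i i b hi hti)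
      obtain ⟨i', h3, h4⟩ := hP' g ⟨i, Or.inr ⟨b, hti, hg⟩⟩
      rw [← h4] at h3
      have hi'i : i' ≠ i := by rintro rfl; exact hi h3
      have hi'j : i' ≠ j := by rintro rfl; exact hj h3
      omega
  exact ⟨π, fun i => C i (π i), y, hπ, hne, fun i hi => hi.1, hCmeet, hyB, hnode,
    fun i b hb => by rw [hblock i b hb], fun i j b hb hb' h => by
      rw [hblock i b hb, hblock j b hb'] at h
      exact hπ ((τ b).injective (congrArg Prod.fst h)), hdetour⟩

/-- The edges available to the path to `t i`. -/
def routingRel (L : β → Fin Δ → Fin k) (B : β) (t : Fin Δ → (Fin Δ × Fin k) ⊕ β)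
    (π : Fin Δ → Fin Δ) (direct : Fin Δ → Prop) (y : Fin Δ → Fin Δ × Fin k)
    (i : Fin Δ) (x : Fin Δ × Fin k) (b : β) : Prop :=
  L b x.1 = x.2 ∧ ((b = B ∧ x.1 = π i) ∨
    (¬direct i ∧ b ≠ B ∧ L b (π i) = L B (π i)) ∨
    (direct i ∧ t i = Sum.inr b ∧ x.1 = π i) ∨
    (¬direct i ∧ t i = Sum.inr b ∧ x = y i) ∨
    (¬direct i ∧ (y i).1 = π i ∧ ∀ g, L b g ≠ L B g))

section RoutingPlan

variable {B : β} {t : Fin Δ → (Fin Δ × Fin k) ⊕ β} {π : Fin Δ → Fin Δ} {direct : Fin Δ → Prop}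
  {y : Fin Δ → Fin Δ × Fin k}

lemma RoutingPlan.disjoint (hp : RoutingPlan L B t π direct y) (hL : IsOrthogonalArray L)
    {i j : Fin Δ} {x : Fin Δ × Fin k} {b : β} (hRi : routingRel L B t π direct y i x b)
    (hRj : routingRel L B t π direct y j x b) : i = j := by
  have direct_meet : ∀ i b, direct i → t i = Sum.inr b → L b (π i) = L B (π i) := by
    intro i b hi hb
    rcases hp.direct_target i hi with h | ⟨c, hc, h⟩
    · simp_all
    · obtain rfl : b = c := by simpa [hb] using hc
      exact h
  have not_meet_last : ∀ i j b, ¬direct i → L b (π i) = L B (π i) → t j = Sum.inr b → False :=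
    fun i j b h1 h2 h3 => hp.not_meet i j b h1 h3 h2
  have direct_ne_last : ∀ i j x b, direct i → t i = Sum.inr b → x.1 = π i → L b x.1 = x.2 →
      ¬direct j → x = y j → False := by
    rintro i j x b h1 h2 h3 h4 h5 rfl
    apply hp.off j h5
    rw [← h4, h3, direct_meet i b h1 h2]
  have detour_ne_last : ∀ i j b, ¬direct i → t i = Sum.inr b → ¬direct j → (y j).1 = π j → i = j := by
    intro i j b h1 h2 h3 h4
    by_contra hij
    obtain ⟨l, hl⟩ := hp.detour j h3 h4 i hij h1
    simp_all
  obtain ⟨hx, hi⟩ := hRi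
  obtain ⟨-, hj⟩ := hRj
  rcases hi with ⟨h1, h2⟩ | ⟨h1, h2, h3⟩ | ⟨h1, h2, h3⟩ | ⟨h1, h2, h3⟩ | ⟨h1, h2, h3⟩ <;>
  rcases hj with ⟨h1', h2'⟩ | ⟨h1', h2', h3'⟩ | ⟨h1', h2', h3'⟩ |
    ⟨h1', h2', h3'⟩ | ⟨h1', h2', h3'⟩
  · exact hp.inj (h2.symm.trans h2')
  · exact absurd h1 h2'
  · exact absurd h1 (hp.block_ne j b h2')
  · exact absurd h1 (hp.block_ne j b h2')
  · exact absurd (by rw [h1]) (h3' (π i))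
  · exact absurd h1' h2
  · exact hp.inj (hL.eq_of_meet h2 h3 h3')
  · exact hp.inj (hL.eq_of_meet h2 h3 (direct_meet j b h1' h2'))
  · exact (not_meet_last i j b h1 h3 h2').elim
  · exact absurd h3 (h3' _)
  · exact absurd h1' (hp.block_ne i b h2)
  · exact hp.inj (hL.eq_of_meet h2' (direct_meet i b h1 h2) h3')
  · exact hp.inj (h3.symm.trans h3')
  · exact (direct_ne_last i j x b h1 h2 h3 hx h1' h3').elim
  · exact absurd (direct_meet i b h1 h2) (h3' _)
  · exact absurd h1' (hp.block_ne i b h2)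
  · exact (not_meet_last j i b h1' h3' h2).elim
  · exact (direct_ne_last j i x b h1' h2' h3' hx h1 h3).elim
  · exact hp.sep i j b h2 h2' (h3.symm.trans h3')
  · exact detour_ne_last i j b h1 h2 h1' h2'
  · exact absurd (by rw [h1']) (h3 (π i))
  · exact absurd h3' (h3 _)
  · exact absurd (direct_meet j b h1' h2') (h3 _)
  · exact (detour_ne_last j i b h1' h2' h1 h2).symm
  · by_contra hij
    obtain ⟨l, hl⟩ := hp.detour j h1' h2' i hij h1
    rw [hp.node i _ hl] at h2
    exact hij (hp.inj h2.symm)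

lemma RoutingPlan.hasWalk (hp : RoutingPlan L B t π direct y) (hL : IsOrthogonalArray L)
    (hΔ : 2 ≤ Δ) (hΔk : Δ ≤ k) (i : Fin Δ) :
    HasWalk (bipGraph (routingRel L B t π direct y i)) (Sum.inr B) (t i) 6 := by
  have : Nontrivial (Fin Δ) := Fin.nontrivial_iff_two_le.2 hΔ
  have hstart : HasWalk (bipGraph (routingRel L B t π direct y i)) (Sum.inr B)
      (Sum.inl (π i, L B (π i))) 1 :=
    HasWalk.of_adj (bipGraph_adj_inr_inl.2 ⟨rfl, Or.inl ⟨rfl, rfl⟩⟩)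
  by_cases hi : direct i
  · obtain h | ⟨b, hb, h⟩ := hp.direct_target i hi
    · rw [h]
      exact hstart.mono_length (by norm_num)
    · rw [hb]
      exact (hstart.trans (HasWalk.of_adj (bipGraph_adj_inl_inr_s17.2
        ⟨h, Or.inr (Or.inr (Or.inl ⟨hi, hb, rfl⟩))⟩))).mono_length (by norm_num)
  · have hmid : HasWalk (bipGraph (routingRel L B t π direct y i)) (Sum.inr B)
        (Sum.inl (y i)) 5 := by
      have hoff := hp.off i hi
      by_cases hy : (y i).1 = π i
      · obtain ⟨c', hc', hmiss⟩ := hL.exists_block_disjoint hΔ hΔk B (y i).1 (y i).2 hoff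
        obtain ⟨g, hg⟩ := exists_ne (π i)
        obtain ⟨c, ⟨h1, h2⟩, -⟩ := hL (π i) g hg.symm (L B (π i)) (L c' g)
        have hcB : c ≠ B := by
          rintro rfl
          exact hmiss g h2.symm
        have htag := fun x (hx : L c x.1 = x.2) =>
          show routingRel L B t π direct y i x c from ⟨hx, Or.inr (Or.inl ⟨hi, hcB, h1⟩)⟩
        have hmis := fun x (hx : L c' x.1 = x.2) =>
          show routingRel L B t π direct y i x c' from
            ⟨hx, Or.inr (Or.inr (Or.inr (Or.inr ⟨hi, hy, hmiss⟩)))⟩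
        exact (hstart.trans
          (HasWalk.through_block (y := (g, L c' g)) (htag _ h1) (htag _ h2))).trans
          (HasWalk.through_block (hmis _ rfl) (hmis _ hc'))
      · obtain ⟨c, ⟨h1, h2⟩, -⟩ := hL (π i) (y i).1 (Ne.symm hy) (L B (π i)) (y i).2
        have hcB : c ≠ B := by
          rintro rfl
          exact hoff h2.symm
        have htag := fun x (hx : L c x.1 = x.2) =>
          show routingRel L B t π direct y i x c from ⟨hx, Or.inr (Or.inl ⟨hi, hcB, h1⟩)⟩
        exact (hstart.trans (HasWalk.through_block (htag _ h1) (htag _ h2))).mono_length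
          (by norm_num)
    rcases hti : t i with x | b
    · rw [← hp.node i x hti]
      exact hmid.mono_length (by norm_num)
    · exact hmid.trans (HasWalk.of_adj (bipGraph_adj_inl_inr_s17.2
        ⟨hp.block i b hti, Or.inr (Or.inr (Or.inr (Or.inl ⟨hi, hti, rfl⟩)))⟩))

end RoutingPlan

/-- One-to-many edge-disjoint routing inside a transversal design: the source is a block `B`, the
targets are distinct nodes and arbitrary blocks other than `B`. -/
lemma IsOrthogonalArray.exists_routing (hL : IsOrthogonalArray L) (hΔ : 2 ≤ Δ) (hΔk : Δ ≤ k)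
    (B : β) (t : Fin Δ → (Fin Δ × Fin k) ⊕ β) (htB : ∀ i, t i ≠ Sum.inr B)
    (htinj : ∀ i j x, t i = Sum.inl x → t j = Sum.inl x → i = j) :
    ∃ R : Fin Δ → Fin Δ × Fin k → β → Prop,
      (∀ i x b, R i x b → L b x.1 = x.2) ∧
      (∀ i j x b, R i x b → R j x b → i = j) ∧
      ∀ i, HasWalk (bipGraph (R i)) (Sum.inr B) (t i) 6 := by
  obtain ⟨π, direct, y, hp⟩ := hL.exists_routingPlan hΔ B t htB htinj
  exact ⟨routingRel L B t π direct y, fun i x b h => h.1, fun i j x b => hp.disjoint hL,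
    hp.hasWalk hL hΔ hΔk⟩

end OrthogonalArray

lemma TwoStep.exists_coordinates {ν0 β0 νT βT : Type} {Δ k : ℕ}
    {adj0 : ν0 → β0 → Prop} {groupT : νT → Fin Δ} {adjT : νT → βT → Prop}
    {adjH : ν0 × Fin k → β0 × βT → Prop} (h : TwoStep Δ k adj0 groupT adjT adjH) (Q : β0) :
    ∃ (e : Fin Δ → ν0) (L : βT → Fin Δ → Fin k), Function.Injective e ∧
      (∀ p, adj0 p Q ↔ ∃ g, e g = p) ∧
      (∀ x b, adjH x (Q, b) ↔ ∃ g, e g = x.1 ∧ L b g = x.2) ∧ IsOrthogonalArray L := by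
  obtain ⟨e, f, g, he, hadj, hsurj, hgroup, hcopy⟩ := h.copy Q
  choose n hn hun using fun b i => h.td.blockMeets (g.symm b) i
  have hfn : ∀ b i, (f (n b i) : ν0 × Fin k) = (e i, (f (n b i) : ν0 × Fin k).2) := by
    intro b i
    have := hgroup (n b i)
    rw [(hn b i).1] at this
    exact Prod.ext this rfl
  have hadjH : ∀ x b, adjH x (Q, b) ↔
      ∃ i, e i = x.1 ∧ (f (n b i) : ν0 × Fin k).2 = x.2 := by
    intro x b
    constructor
    · intro hx
      obtain ⟨z, hz⟩ := f.surjective ⟨x, h.supp x Q b hx⟩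
      have hzx : (f z : ν0 × Fin k) = x := congrArg Subtype.val hz
      have hzb : adjT z (g.symm b) := by
        rw [hcopy, hzx]
        simpa using hx
      have hzn := hun b (groupT z) z ⟨rfl, hzb⟩
      refine ⟨groupT z, ?_, ?_⟩
      · rw [← hgroup, hzx]
      · rw [← hzn, hzx]
    · rintro ⟨i, h1, h2⟩
      have h3 := (hcopy _ _).1 (hn b i).2
      rw [hfn, h1, h2] at h3
      simpa using h3
  refine ⟨e, fun b i => (f (n b i) : ν0 × Fin k).2, he,
    fun p => ⟨hsurj p, by rintro ⟨i, rfl⟩; exact hadj i⟩, hadjH, fun i i' hi j j' => ?_⟩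
  obtain ⟨x, hx⟩ := f.surjective ⟨(e i, j), hadj i⟩
  obtain ⟨y, hy⟩ := f.surjective ⟨(e i', j'), hadj i'⟩
  have hx' : (f x : ν0 × Fin k) = (e i, j) := congrArg Subtype.val hx
  have hy' : (f y : ν0 × Fin k) = (e i', j') := congrArg Subtype.val hy
  have hgx : groupT x = i := he (by rw [← hgroup, hx'])
  have hgy : groupT y = i' := he (by rw [← hgroup, hy'])
  have hmem : ∀ i j b, (f (n b i) : ν0 × Fin k).2 = j ↔ adjH (e i, j) (Q, b) := by
    intro i j b
    rw [hadjH]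
    constructor
    · exact fun h => ⟨i, rfl, h⟩
    · rintro ⟨i', h1, h2⟩
      rw [← he h1]
      exact h2
  obtain ⟨b, ⟨hb1, hb2⟩, hub⟩ := h.td.pairGen x y (by rw [hgx, hgy]; exact hi)
  refine ⟨g b, ?_, fun c hc => ?_⟩
  · simp only [hmem, ← hx', ← hy', ← hcopy]
    exact ⟨hb1, hb2⟩
  · simp only [hmem] at hc
    rw [← hx', ← hy'] at hc
    have := hub (g.symm c) (by simpa [hcopy] using hc)
    rw [← this, Equiv.apply_symm_apply]

lemma SimpleGraph.Connected.exists_adj_dist_add_one {V : Type} {G : SimpleGraph V}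
    (hG : G.Connected) {r v : V} (hv : v ≠ r) : ∃ u, G.Adj v u ∧ G.dist r u + 1 = G.dist r v := by
  obtain ⟨w, hw⟩ := hG.exists_walk_length_eq_dist v r
  cases w with
  | nil => exact absurd rfl hv
  | cons h w =>
    rename_i u
    refine ⟨u, h, ?_⟩
    have h1 := SimpleGraph.dist_le w
    have h2 := hG.dist_triangle (u := v) (v := u) (w := r)
    rw [SimpleGraph.dist_eq_one_iff_adj.2 h] at h2
    rw [SimpleGraph.Walk.length_cons] at hw
    rw [SimpleGraph.dist_comm (u := r), SimpleGraph.dist_comm (u := r)]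
    omega

/-- Edge-disjoint routing, outside the copy of the design at `Q0`, from nodes adjacent to that copy
to the blocks `Bs i`, along the branches of a breadth-first search tree of `H0` rooted at `Q0`. -/
lemma exists_routing_off_root {ν0 β0 βT : Type} {Δ k : ℕ} (hΔ : 2 ≤ Δ) (hΔk : Δ ≤ k)
    {adj0 : ν0 → β0 → Prop} {adjH : ν0 × Fin k → β0 × βT → Prop}
    (hconn : (bipGraph adj0).Connected)
    {e : β0 → Fin Δ → ν0} {L : β0 → βT → Fin Δ → Fin k} (he : ∀ Q, Function.Injective (e Q))
    (hadj0 : ∀ p Q, adj0 p Q ↔ ∃ g, e Q g = p)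
    (hadjH : ∀ x v, adjH x v ↔ ∃ g, e v.1 g = x.1 ∧ L v.1 v.2 g = x.2)
    (hL : ∀ Q, IsOrthogonalArray (L Q)) (Q0 : β0) (Bs : Fin Δ → β0 × βT) :
    ∃ (R : Fin Δ → ν0 × Fin k → β0 × βT → Prop) (s : Fin Δ → ν0 × Fin k),
      (∀ i x v, R i x v → adjH x v ∧ v.1 ≠ Q0) ∧
      (∀ i j x v, R i x v → R j x v → i = j) ∧
      ∀ i, (Bs i).1 ≠ Q0 → adj0 (s i).1 Q0 ∧ (∀ j, (Bs j).1 ≠ Q0 → s i = s j → i = j) ∧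
        HasWalk (bipGraph (R i)) (Sum.inl (s i)) (Sum.inr (Bs i))
          ((bipGraph adj0).dist (Sum.inr Q0) (Sum.inr (Bs i).1) + 1) := by
  classical
  set D : ν0 ⊕ β0 → ℕ := (bipGraph adj0).dist (Sum.inr Q0) with hDdef
  have hparB : ∀ Q, ∃ g, Q ≠ Q0 → D (Sum.inl (e Q g)) + 1 = D (Sum.inr Q) := by
    intro Q
    by_cases hQ : Q = Q0
    · exact ⟨⟨0, by omega⟩, fun h => absurd hQ h⟩
    · obtain ⟨u, hu, hd⟩ := hconn.exists_adj_dist_add_one (r := Sum.inr Q0) (v := Sum.inr Q)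
        (by simpa using hQ)
      rcases u with p | Q'
      · obtain ⟨g, rfl⟩ := (hadj0 p Q).1 (bipGraph_adj_inr_inl.1 hu)
        exact ⟨g, fun _ => hd⟩
      · simp [bipGraph_adj_iff] at hu
  choose gp hgp using hparB
  have hparN : ∀ p, ∃ Q, adj0 p Q ∧ D (Sum.inr Q) + 1 = D (Sum.inl p) := by
    intro p
    obtain ⟨u, hu, hd⟩ := hconn.exists_adj_dist_add_one (r := Sum.inr Q0) (v := Sum.inl p)
      (by simp)
    rcases u with p' | Q
    · simp [bipGraph_adj_iff] at hu
    · exact ⟨Q, bipGraph_adj_inl_inr_s17.1 hu, hd⟩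
  let par : β0 → ν0 := fun Q => e Q (gp Q)
  let lab : β0 × βT → Fin k := fun v => L v.1 v.2 (gp v.1)
  choose σ hσinj hσ using fun p => exists_injective_section hΔk
    (fun i a => (Bs i).1 ≠ Q0 ∧ par (Bs i).1 = p ∧ lab (Bs i) = a)
    (fun i a b ha hb => ha.2.2.symm.trans hb.2.2)
  let dir : Fin Δ → ν0 → Prop := fun i p =>
    (Bs i).1 ≠ Q0 ∧ par (Bs i).1 = p ∧ σ p i = lab (Bs i)
  have hrep : ∀ v : β0 × βT, ∃ w : Fin Δ, (∃ i, Bs i = v) → v.1 ≠ Q0 →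
      dir w (par v.1) ∧ σ (par v.1) w = lab v := by
    intro v
    by_cases hv : (∃ i, Bs i = v) ∧ v.1 ≠ Q0
    · obtain ⟨⟨i, rfl⟩, hi⟩ := hv
      obtain ⟨w, ⟨h1, h2, h3⟩, h4⟩ := hσ (par (Bs i).1) (lab (Bs i)) ⟨i, hi, rfl, rfl⟩
      exact ⟨w, fun _ _ => ⟨⟨h1, h2, h4.trans h3.symm⟩, h4⟩⟩
    · exact ⟨gp Q0, fun h1 h2 => absurd ⟨h1, h2⟩ hv⟩
  choose rep hrep using hrep
  let φ : Fin Δ → Fin Δ := fun i => Equiv.swap (rep (Bs i)) (gp (Bs i).1) i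
  have hφ : ∀ i, (Bs i).1 ≠ Q0 → ¬dir i (par (Bs i).1) → φ i ≠ gp (Bs i).1 := by
    intro i hi hd h
    have h' : i = rep (Bs i) := by
      simpa [φ, Equiv.swap_apply_eq_iff] using h
    apply hd
    have := (hrep (Bs i) ⟨i, rfl⟩ hi).1
    rwa [← h'] at this
  let R : Fin Δ → ν0 × Fin k → β0 × βT → Prop := fun i x v => adjH x v ∧ v.1 ≠ Q0 ∧
    ((lab v = σ (par v.1) i ∧ ¬dir i (par v.1)) ∨
      (v = Bs i ∧ dir i (par v.1) ∧ x.1 = par v.1) ∨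
      (v = Bs i ∧ ¬dir i (par v.1) ∧ x.1 = e v.1 (φ i)))
  have htransit : ∀ i Q g j, Q ≠ Q0 → g ≠ gp Q → ¬dir i (par Q) →
      HasWalk (bipGraph (R i)) (Sum.inl (par Q, σ (par Q) i)) (Sum.inl (e Q g, j)) 2 := by
    intro i Q g j hQ hg hd
    obtain ⟨c, ⟨h1, h2⟩, -⟩ := hL Q (gp Q) g hg.symm (σ (par Q) i) j
    exact HasWalk.through_block (b := (Q, c))
      ⟨(hadjH _ _).2 ⟨gp Q, rfl, h1⟩, hQ, Or.inl ⟨h1, hd⟩⟩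
      ⟨(hadjH _ _).2 ⟨g, rfl, h2⟩, hQ, Or.inl ⟨h1, hd⟩⟩
  have hdescend : ∀ i, (Bs i).1 ≠ Q0 → ∀ N p, D (Sum.inl p) ≤ N →
      D (Sum.inl p) ≤ D (Sum.inl (par (Bs i).1)) → ∃ q, adj0 q Q0 ∧
        HasWalk (bipGraph (R i)) (Sum.inl (q, σ q i)) (Sum.inl (p, σ p i)) (D (Sum.inl p) - 1) := by
    intro i hi N
    induction N with
    | zero =>
      intro p hp
      obtain ⟨Q, -, hQ⟩ := hparN p
      omega
    | succ N ih =>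
      intro p hp hpi
      obtain ⟨Q, hpQ, hQ⟩ := hparN p
      by_cases hQ0 : Q = Q0
      · subst hQ0
        exact ⟨p, hpQ, HasWalk.refl _ _ _⟩
      · have hd := hgp Q hQ0
        obtain ⟨q, hq, hw⟩ := ih (par Q) (by simp only [par]; omega)
          (by simp only [par] at hpi ⊢; omega)
        obtain ⟨g, rfl⟩ := (hadj0 p Q).1 hpQ
        refine ⟨q, hq, (hw.trans (htransit i Q g _ hQ0 ?_ ?_)).mono_length ?_⟩
        · rintro rfl
          omega
        · rintro ⟨-, h, -⟩
          rw [h] at hpi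
          simp only [par] at hpi
          omega
        · obtain ⟨Q', -, hQ'⟩ := hparN (par Q)
          simp only [par] at hQ' ⊢
          omega
  have htop : ∀ i, ∃ q, (Bs i).1 ≠ Q0 → adj0 q Q0 ∧
      HasWalk (bipGraph (R i)) (Sum.inl (q, σ q i))
        (Sum.inl (par (Bs i).1, σ (par (Bs i).1) i)) (D (Sum.inl (par (Bs i).1)) - 1) := by
    intro i
    by_cases hi : (Bs i).1 = Q0
    · exact ⟨par Q0, fun h => absurd hi h⟩
    · obtain ⟨q, hq⟩ := hdescend i hi _ _ le_rfl le_rfl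
      exact ⟨q, fun _ => hq⟩
  choose top htop using htop
  refine ⟨R, fun i => (top i, σ (top i) i), fun i x v h => ⟨h.1, h.2.1⟩, ?_, fun i hi =>
    ⟨(htop i hi).1, fun j hj hij => ?_, ?_⟩⟩
  · have transit_ne_last : ∀ i j v, lab v = σ (par v.1) i → ¬dir i (par v.1) → v = Bs j → v.1 ≠ Q0 →
        False := by
      rintro i j v h1 h2 rfl h3
      obtain ⟨h4, h5⟩ := hrep (Bs j) ⟨j, rfl⟩ h3
      rw [hσinj _ (h5.trans h1)] at h4
      exact h2 h4
    have direct_ne_last : ∀ i j v p, v = Bs i → dir i (par v.1) → p = par v.1 → v = Bs j →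
        ¬dir j (par v.1) → p = e v.1 (φ j) → v.1 ≠ Q0 → False := by
      rintro i j v p - - rfl rfl h1 h2 h3
      exact hφ j h3 h1 (he _ h2).symm
    have hdlab : ∀ i v, v = Bs i → dir i (par v.1) → lab v = σ (par v.1) i := by
      rintro i v rfl h
      exact h.2.2.symm
    rintro i j x v ⟨-, hv, hi⟩ ⟨-, -, hj⟩
    rcases hi with ⟨h1, h2⟩ | ⟨h1, h2, h3⟩ | ⟨h1, h2, h3⟩ <;>
    rcases hj with ⟨h1', h2'⟩ | ⟨h1', h2', h3'⟩ | ⟨h1', h2', h3'⟩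
    · exact hσinj _ (h1.symm.trans h1')
    · exact hσinj _ (h1.symm.trans (hdlab j v h1' h2'))
    · exact (transit_ne_last i j v h1 h2 h1' hv).elim
    · exact hσinj _ ((hdlab i v h1 h2).symm.trans h1')
    · exact hσinj _ ((hdlab i v h1 h2).symm.trans (hdlab j v h1' h2'))
    · exact (direct_ne_last i j v _ h1 h2 h3 h1' h2' h3' hv).elim
    · exact (transit_ne_last j i v h1' h2' h1 hv).elim
    · exact (direct_ne_last j i v _ h1' h2' h3' h1 h2 h3 hv).elim
    · have h := he _ (h3.symm.trans h3')
      simp only [φ, ← h1, ← h1'] at h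
      exact (Equiv.swap _ _).injective h
  · have h1 : top i = top j := congrArg Prod.fst hij
    have h2 : σ (top i) i = σ (top j) j := congrArg Prod.snd hij
    rw [← h1] at h2
    exact hσinj _ h2
  · have hlen : D (Sum.inl (par (Bs i).1)) - 1 + 3 = D (Sum.inr (Bs i).1) + 1 := by
      have h1 := hgp (Bs i).1 hi
      obtain ⟨Q', -, hQ'⟩ := hparN (par (Bs i).1)
      simp only [par] at hQ' ⊢
      omega
    rw [← hlen]
    refine (htop i hi).2.trans ?_
    by_cases hd : dir i (par (Bs i).1)
    · exact (HasWalk.of_adj (bipGraph_adj_inl_inr_s17.2 ⟨(hadjH _ _).2 ⟨gp (Bs i).1, rfl,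
        hd.2.2.symm⟩, hi, Or.inr (Or.inl ⟨rfl, hd, rfl⟩)⟩)).mono_length (by norm_num)
    · exact (htransit i _ (φ i) (L (Bs i).1 (Bs i).2 (φ i)) hi (hφ i hi hd) hd).trans
        (HasWalk.of_adj (bipGraph_adj_inl_inr_s17.2 ⟨(hadjH _ _).2 ⟨φ i, rfl, rfl⟩, hi,
          Or.inr (Or.inr ⟨rfl, hd, rfl⟩)⟩))

/-- Let `k, Δ, d ≥ 2` with `Δ ≤ k`, and let `H` (given by `adjH`) be
built by the 2-step method from the connected `(d,Δ)`-bipartite graph `H0` using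
the `[Δ,k]`-transversal design `T`.  Let `B = (Q0, V0)` be a block of `H` lying in
`B_{Q0}` and let `Bs 1, …, Bs Δ` be blocks of `H`, not necessarily distinct but
each different from `B`.  Suppose `Z` is a subtree of `H0` (a vertex set whose
induced subgraph is a tree) rooted at `Q0`, such that every block `Q` of `H0` with
some `Bs i ∈ B_Q` is a vertex of `Z`, every leaf of `Z` (a non-root vertex with
exactly one neighbour in `Z`) is such a block, and `Z` has depth `h`, measured in
edges of the bipartite graph `H0` (so `h` is even).  Then there exist pairwise
edge-disjoint paths in `H` from `B` to each `Bs i`, each of length at most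
`3 * (h / 2) + 7` (i.e. `3h/2 + 7`). -/
theorem twoStep_one_to_many_lengths {ν0 β0 νT βT : Type} (d Δ k h : ℕ)
    (hd : 2 ≤ d) (hΔ : 2 ≤ Δ) (hk : 2 ≤ k) (hΔk : Δ ≤ k)
    (adj0 : ν0 → β0 → Prop) (groupT : νT → Fin Δ) (adjT : νT → βT → Prop)
    (adjH : ν0 × Fin k → β0 × βT → Prop)
    (hH0 : IsBipartiteDegRank d Δ adj0)
    (hconn : (bipGraph adj0).Connected)
    (h2 : TwoStep Δ k adj0 groupT adjT adjH)
    (Q0 : β0) (V0 : βT) (Bs : Fin Δ → β0 × βT)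
    (hBs : ∀ i, Bs i ≠ (Q0, V0))
    (Z : Set (ν0 ⊕ β0)) (hQ0Z : Sum.inr Q0 ∈ Z)
    (htree : ((bipGraph adj0).induce Z).IsTree)
    (hcover : ∀ Q : β0, (∃ i, (Bs i).1 = Q) → Sum.inr Q ∈ Z)
    (hleaf : ∀ v : Z, v.1 ≠ Sum.inr Q0 →
      Nat.card {w : Z // ((bipGraph adj0).induce Z).Adj v w} = 1 →
      ∃ Q : β0, v.1 = Sum.inr Q ∧ ∃ i, (Bs i).1 = Q)
    (heven : 2 ∣ h)
    (hdepth : ∀ v : Z, ((bipGraph adj0).induce Z).dist ⟨Sum.inr Q0, hQ0Z⟩ v ≤ h)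
    (hdepth' : ∃ v : Z, ((bipGraph adj0).induce Z).dist ⟨Sum.inr Q0, hQ0Z⟩ v = h) :
    ∃ p : (i : Fin Δ) → (bipGraph adjH).Walk (Sum.inr (Q0, V0)) (Sum.inr (Bs i)),
      (∀ i, (p i).IsPath ∧ (p i).length ≤ 3 * (h / 2) + 7) ∧
      PairwiseEdgeDisjoint p := by
  choose e L he hadj0 hadjH' hL using h2.exists_coordinates
  have hadjH : ∀ x v, adjH x v ↔ ∃ g, e v.1 g = x.1 ∧ L v.1 v.2 g = x.2 :=
    fun x v => hadjH' v.1 x v.2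
  obtain ⟨R, s, hR, hRdisj, hs⟩ :=
    exists_routing_off_root hΔ hΔk hconn he (fun p Q => hadj0 Q p) hadjH hL Q0 Bs
  have hdist : ∀ i, (bipGraph adj0).dist (Sum.inr Q0) (Sum.inr (Bs i).1) ≤ h := by
    intro i
    let v : Z := ⟨Sum.inr (Bs i).1, hcover _ ⟨i, rfl⟩⟩
    obtain ⟨w, hw⟩ := htree.connected.exists_walk_length_eq_dist ⟨Sum.inr Q0, hQ0Z⟩ v
    have h1 := SimpleGraph.dist_le (w.map (SimpleGraph.Embedding.induce Z).toHom)
    rw [SimpleGraph.Walk.length_map, hw] at h1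
    exact h1.trans (hdepth v)
  have htask : ∀ i, ∃ a : (Fin Δ × Fin k) ⊕ βT,
      ((Bs i).1 = Q0 → a = Sum.inr (Bs i).2) ∧
      ((Bs i).1 ≠ Q0 → ∃ g, e Q0 g = (s i).1 ∧ a = Sum.inl (g, (s i).2)) := by
    intro i
    by_cases hi : (Bs i).1 = Q0
    · exact ⟨_, fun _ => rfl, fun h => absurd hi h⟩
    · obtain ⟨g, hg⟩ := (hadj0 Q0 _).1 (hs i hi).1
      exact ⟨_, fun h => absurd h hi, fun _ => ⟨g, hg, rfl⟩⟩
  choose t ht0 ht1 using htask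
  have hinl : ∀ i x, t i = Sum.inl x → (Bs i).1 ≠ Q0 ∧ s i = (e Q0 x.1, x.2) := by
    intro i x hx
    have hi : (Bs i).1 ≠ Q0 := fun h => by simp [ht0 i h] at hx
    obtain ⟨g, hg, hti⟩ := ht1 i hi
    obtain rfl : (g, (s i).2) = x := by simpa [hti] using hx
    exact ⟨hi, Prod.ext hg.symm rfl⟩
  obtain ⟨S, hS, hSdisj, hSwalk⟩ := (hL Q0).exists_routing hΔ hΔk V0 t
    (fun i hi => by
      by_cases h : (Bs i).1 = Q0
      · rw [ht0 i h] at hi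
        exact hBs i (Prod.ext h (Sum.inr.inj hi))
      · obtain ⟨g, -, hg⟩ := ht1 i h
        simp [hg] at hi)
    (fun i j x hi hj => (hs i (hinl i x hi).1).2.1 j (hinl j x hj).1
      ((hinl i x hi).2.trans (hinl j x hj).2.symm))
  refine exists_edgeDisjoint_paths_s17
    (fun i x v => R i x v ∨ (v.1 = Q0 ∧ ∃ g, e Q0 g = x.1 ∧ S i (g, x.2) v.2)) ?_ ?_ ?_
  · rintro i x ⟨Q, b⟩ (h | ⟨rfl, g, hg, h⟩)
    · exact (hR i x _ h).1
    · exact (hadjH x _).2 ⟨g, hg, hS i _ b h⟩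
  · rintro i j x v (h | ⟨hv, g, hg, h⟩) (h' | ⟨hv', g', hg', h'⟩)
    · exact hRdisj i j x v h h'
    · exact absurd hv' (hR i x v h).2
    · exact absurd hv (hR j x v h').2
    · obtain rfl := he Q0 (hg.trans hg'.symm)
      exact hSdisj i j _ _ h h'
  · intro i
    have hroot := (hSwalk i).map (bipGraphHom
      (R' := fun x v => R i x v ∨ (v.1 = Q0 ∧ ∃ g, e Q0 g = x.1 ∧ S i (g, x.2) v.2))
      (fun x : Fin Δ × Fin k => (e Q0 x.1, x.2)) (fun b => (Q0, b))
      (fun x b h => Or.inr ⟨rfl, x.1, rfl, h⟩))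
    by_cases hi : (Bs i).1 = Q0
    · have hB : Bs i = (Q0, (Bs i).2) := Prod.ext hi rfl
      rw [ht0 i hi] at hroot
      rw [hB]
      exact hroot.mono_length (by omega)
    · obtain ⟨g, hg, hti⟩ := ht1 i hi
      rw [hti] at hroot
      have hsi : s i = (e Q0 g, (s i).2) := Prod.ext hg.symm rfl
      have hlow := (hs i hi).2.2.mono_rel (S := fun x v => R i x v ∨
        (v.1 = Q0 ∧ ∃ g, e Q0 g = x.1 ∧ S i (g, x.2) v.2)) (fun x v h => Or.inl h)
      rw [hsi] at hlow
      have := hdist i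
      exact (hroot.trans hlow).mono_length (by omega)
end
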